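/- There exist Banach spaces X, Y, Z and a compact continuous bilinear operator T : X × Y → Z such that neither the transpose T^{*1} : Z^* × Y → X^* nor the transpose T^{*2} : X × Z^* → Y^* is a compact bilinear operator. -/

import Mathlib

open Filter Topology Metric

/-!
Take for `T` the evaluation pairing `E × E* → 𝕜` of an infinite-dimensional space `E`. It is compact
because bounded subsets of the scalar field are relatively compact. Freezing the scalar functional
at the identity of `𝕜`, the transpose `T^{*1}` becomes the identity of `E*` and `T^{*2}` becomes the
isometric embedding `E → E**`; by Riesz's theorem neither of these is a compact operator.
-/

open NormedSpace
open scoped lp ENNReal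

section CompactBilinear

variable {𝕜 X Y Z : Type*} [NontriviallyNormedField 𝕜]
  [NormedAddCommGroup X] [NormedSpace 𝕜 X] [NormedAddCommGroup Y] [NormedSpace 𝕜 Y]
  [NormedAddCommGroup Z] [NormedSpace 𝕜 Z]

/-- A continuous bilinear operator, in curried form, is compact if it maps the product of the closed
unit balls to a relatively compact set. -/
def IsCompactBilinear (T : X →L[𝕜] Y →L[𝕜] Z) : Prop :=
  IsCompact (closure (Set.image2 (fun x y => T x y) (closedBall 0 1) (closedBall 0 1)))

/-- The transpose `T^{*1} : Z* × Y → X*` of a bilinear operator, `(g, y) ↦ g (T · y)`. -/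
noncomputable def transposeLeft (T : X →L[𝕜] Y →L[𝕜] Z) :
    StrongDual 𝕜 Z →L[𝕜] Y →L[𝕜] StrongDual 𝕜 X :=
  ((ContinuousLinearMap.compL 𝕜 X Z 𝕜).flip.comp T.flip).flip

/-- The transpose `T^{*2} : X × Z* → Y*` of a bilinear operator, `(x, g) ↦ g (T x ·)`. -/
noncomputable def transposeRight (T : X →L[𝕜] Y →L[𝕜] Z) :
    X →L[𝕜] StrongDual 𝕜 Z →L[𝕜] StrongDual 𝕜 Y :=
  (ContinuousLinearMap.compL 𝕜 Y Z 𝕜).flip.comp T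

namespace IsCompactBilinear

theorem of_properSpace [ProperSpace Z] (T : X →L[𝕜] Y →L[𝕜] Z) : IsCompactBilinear T := by
  suffices image_subset : Set.image2 (fun x y => T x y) (closedBall 0 1) (closedBall 0 1) ⊆
      closedBall 0 ‖T‖ from (isBounded_closedBall.subset image_subset).isCompact_closure
  rintro _ ⟨x, hx, y, hy, rfl⟩
  rw [mem_closedBall_zero_iff] at hx hy ⊢
  simpa using T.le_of_opNorm₂_le_of_le le_rfl hx hy

theorem flip {T : X →L[𝕜] Y →L[𝕜] Z} (hT : IsCompactBilinear T) : IsCompactBilinear T.flip := by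
  rw [IsCompactBilinear, Set.image2_swap]
  exact hT

theorem isCompactOperator_apply_of_norm_le_one {T : X →L[𝕜] Y →L[𝕜] Z} (hT : IsCompactBilinear T)
    {x : X} (hx : ‖x‖ ≤ 1) : IsCompactOperator (T x) := by
  refine ⟨_, hT, mem_of_superset (closedBall_mem_nhds 0 one_pos) fun y hy => ?_⟩
  exact subset_closure ⟨x, mem_closedBall_zero_iff.2 hx, y, hy, rfl⟩

theorem isCompactOperator_apply {T : X →L[𝕜] Y →L[𝕜] Z} (hT : IsCompactBilinear T) (x : X) :
    IsCompactOperator (T x) := by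
  obtain ⟨c, hc⟩ := NormedField.exists_lt_norm 𝕜 ‖x‖
  have hc_pos : 0 < ‖c‖ := (norm_nonneg x).trans_lt hc
  have hx : ‖c⁻¹ • x‖ ≤ 1 := by
    rw [norm_smul, norm_inv]
    exact inv_mul_le_one_of_le₀ hc.le hc_pos.le
  have hTx : T x = c • T (c⁻¹ • x) := by
    rw [map_smul, smul_inv_smul₀ (norm_pos_iff.1 hc_pos)]
  rw [hTx]
  exact (hT.isCompactOperator_apply_of_norm_le_one hx).smul c

theorem isCompactOperator_flip_of_transposeLeft {T : X →L[𝕜] Y →L[𝕜] 𝕜}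
    (hT : IsCompactBilinear (transposeLeft T)) : IsCompactOperator T.flip :=
  hT.isCompactOperator_apply (ContinuousLinearMap.id 𝕜 𝕜)

theorem isCompactOperator_of_transposeRight {T : X →L[𝕜] Y →L[𝕜] 𝕜}
    (hT : IsCompactBilinear (transposeRight T)) : IsCompactOperator T :=
  hT.flip.isCompactOperator_apply (ContinuousLinearMap.id 𝕜 𝕜)

end IsCompactBilinear

end CompactBilinear

theorem finiteDimensional_of_isCompactOperator_of_isUniformInducing (𝕜 : Type*) {E F : Type*}
    [NontriviallyNormedField 𝕜] [CompleteSpace 𝕜] [AddCommGroup E] [Module 𝕜 E]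
    [UniformSpace E] [IsUniformAddGroup E] [ContinuousSMul 𝕜 E] [T2Space E]
    [UniformSpace F] {f : E → F} (hf : IsCompactOperator f)
    (hf_inducing : IsUniformInducing f) : FiniteDimensional 𝕜 E := by
  obtain ⟨K, hK, hK_nhds⟩ := hf
  exact .of_totallyBounded_nhds_zero 𝕜 hK_nhds
    (totallyBounded_preimage hf_inducing hK.totallyBounded)

theorem finiteDimensional_of_finiteDimensional_strongDual (𝕜 E : Type*) [Field 𝕜]
    [TopologicalSpace 𝕜] [IsTopologicalRing 𝕜] [AddCommGroup E] [TopologicalSpace E] [Module 𝕜 E]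
    [SeparatingDual 𝕜 E] [FiniteDimensional 𝕜 (StrongDual 𝕜 E)] : FiniteDimensional 𝕜 E :=
  FiniteDimensional.of_injective _ (separatingDual_iff_injective.1 ‹SeparatingDual 𝕜 E›)

theorem not_finiteDimensional_lp (𝕜 ι : Type*) [NormedField 𝕜] [Infinite ι] (p : ℝ≥0∞) :
    ¬ FiniteDimensional 𝕜 ℓ^p(ι, 𝕜) := by
  intro _
  let inclusion : ℓ⁰(ι, 𝕜) →ₗ[𝕜] ℓ^p(ι, 𝕜) := lp.linearMapOfLE 𝕜 _ zero_le
  have inclusion_injective : Function.Injective inclusion :=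
    fun f g hfg => lp.ext (congrArg (⇑) hfg :)
  exact Module.not_finite_of_infinite_basis lp.zeroBasis
    (FiniteDimensional.of_injective inclusion inclusion_injective)

section DualPairing

variable {𝕜 E : Type*} [RCLike 𝕜] [NormedAddCommGroup E] [NormedSpace 𝕜 E]

theorem not_isCompactBilinear_transposeLeft_inclusionInDoubleDual (hE : ¬ FiniteDimensional 𝕜 E) :
    ¬ IsCompactBilinear (transposeLeft (inclusionInDoubleDual 𝕜 E)) := by
  intro h
  have id_compact : IsCompactOperator (id : StrongDual 𝕜 E → StrongDual 𝕜 E) :=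
    h.isCompactOperator_flip_of_transposeLeft
  have := FiniteDimensional.of_isCompactOperator_id (𝕜 := 𝕜) id_compact
  exact hE (finiteDimensional_of_finiteDimensional_strongDual 𝕜 E)

theorem not_isCompactBilinear_transposeRight_inclusionInDoubleDual (hE : ¬ FiniteDimensional 𝕜 E) :
    ¬ IsCompactBilinear (transposeRight (inclusionInDoubleDual 𝕜 E)) := fun h =>
  hE (finiteDimensional_of_isCompactOperator_of_isUniformInducing 𝕜
    h.isCompactOperator_of_transposeRight (inclusionInDoubleDualLi 𝕜).isometry.isUniformInducing)

theorem exists_compact_bilinear_with_noncompact_transposes_general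
    (hE : ¬ FiniteDimensional 𝕜 E) :
    IsCompactBilinear (inclusionInDoubleDual 𝕜 E) ∧
      ¬ IsCompactBilinear (transposeLeft (inclusionInDoubleDual 𝕜 E)) ∧
      ¬ IsCompactBilinear (transposeRight (inclusionInDoubleDual 𝕜 E)) :=
  ⟨.of_properSpace _, not_isCompactBilinear_transposeLeft_inclusionInDoubleDual hE,
    not_isCompactBilinear_transposeRight_inclusionInDoubleDual hE⟩

end DualPairing

/-- Proposition 2.5 (i): there exist Banach spaces `X`, `Y`, `Z` and a compact continuous
bilinear operator `T : X × Y → Z` such that neither of its transposes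
`T^{*1} : Z^* × Y → X^*` and `T^{*2} : X × Z^* → Y^*` is a compact bilinear operator. -/
theorem exists_compact_bilinear_with_noncompact_transposes :
    ∃ (X Y Z : Type) (_ : NormedAddCommGroup X) (_ : NormedSpace ℝ X) (_ : CompleteSpace X)
      (_ : NormedAddCommGroup Y) (_ : NormedSpace ℝ Y) (_ : CompleteSpace Y)
      (_ : NormedAddCommGroup Z) (_ : NormedSpace ℝ Z) (_ : CompleteSpace Z)
      (T : X →L[ℝ] Y →L[ℝ] Z),
      IsCompact (closure (Set.image2 (fun x y => T x y)
        (closedBall (0 : X) 1) (closedBall (0 : Y) 1))) ∧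
      ¬ IsCompact (closure (Set.image2 (fun (g : Z →L[ℝ] ℝ) (y : Y) => g.comp (T.flip y))
        (closedBall (0 : Z →L[ℝ] ℝ) 1) (closedBall (0 : Y) 1))) ∧
      ¬ IsCompact (closure (Set.image2 (fun (x : X) (g : Z →L[ℝ] ℝ) => g.comp (T x))
        (closedBall (0 : X) 1) (closedBall (0 : Z →L[ℝ] ℝ) 1))) := by
  exact ⟨ℓ²(ℕ, ℝ), StrongDual ℝ ℓ²(ℕ, ℝ), ℝ, _, _, inferInstance, _, _, inferInstance, _, _,
    inferInstance, inclusionInDoubleDual ℝ ℓ²(ℕ, ℝ),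
    exists_compact_bilinear_with_noncompact_transposes_general (not_finiteDimensional_lp ℝ ℕ 2)⟩
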